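/- Let f : ℝ → ℝ be continuous with primitive F(s) = ∫₀^s f, let I ⊆ (0,∞) be an open interval, and let (c,x) ↦ Q_c(x) be a family such that for each c ∈ I, Q_c is a C² solution of Q_c'' + f(Q_c) = c·Q_c with Q_c, Q_c' bounded by K e^{−δ|x|} (locally uniformly in c). Assume that c ↦ Q_c(x) is differentiable for each x, with derivative Λ_c(x) = ∂_c Q_c(x) such that Λ_c and ∂_x Λ_c are bounded by K e^{−δ|x|}, and assume that differentiation under the integral sign is valid in the sense that (d/dc) E(Q_c) = ∫ (Q_c' · ∂_x Λ_c − f(Q_c) Λ_c) and (d/dc) ∫ Q_c² = 2∫ Q_c Λ_c. Then for every c ∈ I, (d/dc) E(Q_c) = −(c/2) · (d/dc) ∫ Q_c². -/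

import Mathlib

/-!
The given formula for `dE/dc` and the profile equation reduce the claim to
`∫ (Q' Λ' + Q'' Λ) = 0`, that is, to an integration by parts with the product `Q' Λ`, which vanishes
at infinity. The difficulty is that `Λ = ∂_c Q_c` is not assumed to be differentiable in `x`, so that
`deriv Λ` may be a junk value.

Two facts settle this. First, decaying profiles satisfy `(Q_c')² = c Q_c² - 2 F(Q_c)`
(`first_integral`). Where `Q_c' ≠ 0` this is a separable first-order equation; integrating it and
differentiating the result in `c` gives an explicit formula for `Λ` near such a point, from which
`Λ` is differentiable there (`differentiableAt_paramDeriv`). Second, where `Q'` and `Q''` both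
vanish, `Q' Λ` has derivative `0` because `Λ` is bounded, and the zeros of `Q'` at which `Q'' ≠ 0`
are isolated, hence countable. So the continuous function `Q' Λ` has derivative `Q' Λ' + Q'' Λ` off
a countable set, and the fundamental theorem of calculus applies (`integral_by_parts`).
-/

open MeasureTheory Filter Topology Set

noncomputable section

/-- `g` is bounded by `K e^{-δ|x|}` for some `K, δ > 0`. -/
def ExpBounded (g : ℝ → ℝ) : Prop :=
  ∃ K δ : ℝ, 0 < K ∧ 0 < δ ∧ ∀ x, |g x| ≤ K * Real.exp (-δ * |x|)

/-- Primitive `F(s) = ∫₀ˢ f`. -/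
def Fprim (f : ℝ → ℝ) (s : ℝ) : ℝ := ∫ t in (0:ℝ)..s, f t

/-- Energy `E(w) = ½ ∫ (w')² − ∫ F(w)`. -/
def Energy (f : ℝ → ℝ) (w : ℝ → ℝ) : ℝ :=
  (1/2) * (∫ x : ℝ, (deriv w x) ^ 2) - ∫ x : ℝ, Fprim f (w x)


/-! ### Exponential decay and the first integral -/

lemma ExpBounded.exists_bound {g : ℝ → ℝ} (hg : ExpBounded g) : ∃ K : ℝ, ∀ x, |g x| ≤ K := by
  obtain ⟨K, δ, hK, hδ, h⟩ := hg
  refine ⟨K, fun x => (h x).trans ?_⟩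
  have : Real.exp (-δ * |x|) ≤ 1 := Real.exp_le_one_iff.2 (by nlinarith [abs_nonneg x])
  nlinarith

lemma ExpBounded.tendsto {g : ℝ → ℝ} (hg : ExpBounded g) {l : Filter ℝ}
    (hl : Tendsto (fun x : ℝ => |x|) l atTop) : Tendsto g l (𝓝 0) := by
  obtain ⟨K, δ, hK, hδ, h⟩ := hg
  refine squeeze_zero_norm h ?_
  have h1 : Tendsto (fun x : ℝ => -δ * |x|) l atBot :=
    Tendsto.const_mul_atTop_of_neg (by linarith) hl
  simpa using (Real.tendsto_exp_atBot.comp h1).const_mul K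

lemma ExpBounded.integrable {g : ℝ → ℝ} (hg : ExpBounded g) (hm : Measurable g) :
    Integrable g := by
  obtain ⟨K, δ, hK, hδ, h⟩ := hg
  have h0 : Integrable (fun x : ℝ => Real.exp (-δ * |x|)) := by
    rw [← integrableOn_univ, ← Iic_union_Ioi (a := (0 : ℝ)), integrableOn_union]
    constructor
    · refine (integrableOn_exp_mul_Iic hδ 0).congr_fun (fun x hx => ?_) measurableSet_Iic
      simp [abs_of_nonpos (show x ≤ 0 from hx)]
    · refine (integrableOn_exp_mul_Ioi (neg_lt_zero.2 hδ) 0).congr_fun (fun x hx => ?_)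
        measurableSet_Ioi
      simp [abs_of_pos (show 0 < x from hx)]
  exact (h0.const_mul K).mono' hm.aestronglyMeasurable (Eventually.of_forall h)

lemma hasDerivAt_Fprim {f : ℝ → ℝ} (hf : Continuous f) (s : ℝ) :
    HasDerivAt (Fprim f) (f s) s :=
  intervalIntegral.integral_hasDerivAt_right (hf.intervalIntegrable _ _)
    (hf.stronglyMeasurableAtFilter _ _) hf.continuousAt

lemma ContDiff.hasDerivAt_two {q : ℝ → ℝ} (hq : ContDiff ℝ 2 q) (x : ℝ) :
    HasDerivAt q (deriv q x) x ∧ HasDerivAt (deriv q) (deriv (deriv q) x) x := by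
  have h1 : ContDiff ℝ 1 (deriv q) := by
    have : ContDiff ℝ (1 + 1) q := by simpa [one_add_one_eq_two] using hq
    exact (contDiff_succ_iff_deriv.1 this).2.2
  exact ⟨((hq.differentiable (by norm_num)) x).hasDerivAt,
    ((h1.differentiable (by norm_num)) x).hasDerivAt⟩

/-- `(q')² - c q² + 2 F(q)` is constant along solutions of the profile equation, and decay at
infinity makes the constant zero. -/
lemma first_integral {f : ℝ → ℝ} (hf : Continuous f) {c : ℝ} {q : ℝ → ℝ}
    (hq : ContDiff ℝ 2 q) (heq : ∀ x, deriv (deriv q) x + f (q x) = c * q x)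
    (hb : ExpBounded q) (hb' : ExpBounded (deriv q)) (x : ℝ) :
    deriv q x ^ 2 = c * q x ^ 2 - 2 * Fprim f (q x) := by
  set H : ℝ → ℝ := fun x => deriv q x ^ 2 - c * q x ^ 2 + 2 * Fprim f (q x) with hH
  have hd : ∀ x, HasDerivAt H 0 x := by
    intro x
    obtain ⟨h1, h2⟩ := hq.hasDerivAt_two x
    refine (((h2.pow 2).sub ((h1.pow 2).const_mul c)).add
      (((hasDerivAt_Fprim hf (q x)).comp x h1).const_mul 2)).congr_deriv ?_
    have := heq x
    norm_num
    linear_combination (2 * deriv q x) * this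
  have hF : Tendsto (Fprim f) (𝓝 0) (𝓝 0) := by
    have := (hasDerivAt_Fprim hf 0).continuousAt.tendsto
    simpa [Fprim] using this
  have hq0 := hb.tendsto tendsto_abs_atTop_atTop
  have hlim : Tendsto H atTop (𝓝 0) := by
    simpa using (((hb'.tendsto tendsto_abs_atTop_atTop).pow 2).sub ((hq0.pow 2).const_mul c)).add
      ((hF.comp hq0).const_mul 2)
  have hconst : ∀ y, H y = H x := fun y =>
    is_const_of_deriv_eq_zero (fun z => (hd z).differentiableAt) (fun z => (hd z).deriv) y x
  have h0 : H x = 0 := by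
    exact tendsto_nhds_unique (tendsto_const_nhds.congr fun y => (hconst y).symm) hlim
  simp only [hH] at h0
  linarith

/-! ### Integration by parts across critical points -/

/-- A zero of a differentiable function at which the derivative does not vanish is isolated, so
there are only countably many of them. -/
lemma countable_simple_zeros {p p' : ℝ → ℝ} (hp : ∀ x, HasDerivAt p (p' x) x) :
    {x | p x = 0 ∧ p' x ≠ 0}.Countable := by
  refine Countable.mono (fun x hx => ?_) (countable_setOfPred_isolated_right_within
    (s := {x : ℝ | p x = 0 ∧ p' x ≠ 0}))
  refine ⟨hx, ?_⟩
  rw [← Filter.empty_mem_iff_bot]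
  have h := (hp x).eventually_ne (c := 0) hx.2
  rw [eventually_nhdsWithin_iff] at h
  have h2 : ∀ᶠ y in 𝓝[{x | p x = 0 ∧ p' x ≠ 0} ∩ Ioi x] x, y ∈ ({x}ᶜ : Set ℝ) → p y ≠ 0 :=
    h.filter_mono nhdsWithin_le_nhds
  filter_upwards [h2, self_mem_nhdsWithin] with y hy hy'
  exact hy (ne_of_gt hy'.2) hy'.1.1

/-- Integration by parts against a bounded function `L` that is differentiable wherever `p ≠ 0`.
At a zero of `p` where `p'` vanishes too, `p * L` still has derivative `0`, because `L` is bounded;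
the remaining zeros of `p` are countable. -/
lemma integral_by_parts {p p' L : ℝ → ℝ} (hp : ∀ x, HasDerivAt p (p' x) x)
    (hpt : Tendsto p atTop (𝓝 0)) (hpb : Tendsto p atBot (𝓝 0))
    {K : ℝ} (hL : ∀ x, |L x| ≤ K) (hLd : ∀ x, p x ≠ 0 → DifferentiableAt ℝ L x)
    (hi : Integrable (fun x => p x * deriv L x + p' x * L x)) :
    ∫ x, (p x * deriv L x + p' x * L x) = 0 := by
  have hz : ∀ {l : Filter ℝ}, Tendsto p l (𝓝 0) → Tendsto (fun x => p x * L x) l (𝓝 0) := by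
    intro l hl
    refine squeeze_zero_norm (a := fun x => |p x| * K) (fun x => ?_) ?_
    · rw [norm_mul]
      exact mul_le_mul_of_nonneg_left (hL x) (abs_nonneg _)
    · simpa using hl.abs.mul_const K
  have hcont : Continuous (fun x => p x * L x) := by
    rw [continuous_iff_continuousAt]
    intro x
    by_cases hx : p x = 0
    · have h := (hp x).continuousAt.tendsto
      rw [hx] at h
      have := hz h
      simpa [ContinuousAt, hx] using this
    · exact (hp x).continuousAt.mul (hLd x hx).continuousAt
  have hder : ∀ x, x ∉ {x | p x = 0 ∧ p' x ≠ 0} →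
      HasDerivAt (fun x => p x * L x) (p x * deriv L x + p' x * L x) x := by
    intro x hx
    by_cases h0 : p x = 0
    · have h1 : p' x = 0 := by
        by_contra h
        exact hx ⟨h0, h⟩
      have h2 := hp x
      rw [h1, hasDerivAt_iff_isLittleO] at h2
      rw [h0, h1, hasDerivAt_iff_isLittleO]
      simp only [h0, zero_mul, sub_zero, smul_zero, add_zero] at h2 ⊢
      have h3 : (fun y => p y * L y) =O[𝓝 x] p := by
        refine Asymptotics.IsBigO.of_bound K (Eventually.of_forall fun y => ?_)
        rw [norm_mul, mul_comm]
        exact mul_le_mul_of_nonneg_right (hL y) (norm_nonneg _)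
      exact h3.trans_isLittleO h2
    · exact ((hp x).mul (hLd x h0).hasDerivAt).congr_deriv (add_comm _ _)
  have hFTC : ∀ n : ℝ, ∫ x in (-n)..n, (p x * deriv L x + p' x * L x)
      = p n * L n - p (-n) * L (-n) := fun n =>
    integral_eq_of_hasDerivAt_off_countable (fun x => p x * L x) _ (countable_simple_zeros hp)
      hcont.continuousOn (fun x hx => hder x hx.2) hi.intervalIntegrable
  have h1 := intervalIntegral_tendsto_integral hi tendsto_neg_atTop_atBot tendsto_id
  refine tendsto_nhds_unique h1 ?_
  simp only [id, hFTC]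
  simpa using (hz hpt).sub ((hz hpb).comp tendsto_neg_atTop_atBot)

/-! ### Differentiability of the parameter derivative in space -/

lemma fence_right {q dq : ℝ → ℝ} (hq : ∀ x, HasDerivAt q (dq x) x) {x₀ M r : ℝ} (hM : 0 ≤ M)
    (h : ∀ x, |q x - q x₀| ≤ M * r → |dq x| < M) {x : ℝ} (hx : x ∈ Icc x₀ (x₀ + r)) :
    |q x - q x₀| ≤ M * r := by
  have := image_norm_le_of_norm_deriv_right_lt_deriv_boundary (f := fun x => q x - q x₀) (f' := dq)
    (a := x₀) (b := x₀ + r) (B := fun x => M * (x - x₀)) (B' := fun _ => M)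
    (fun y _ => ((hq y).sub_const _).continuousAt.continuousWithinAt)
    (fun y _ => ((hq y).sub_const _).hasDerivWithinAt) (by simp)
    (fun y => by simpa using ((hasDerivAt_id y).sub_const x₀).const_mul M)
    (fun y hy hyB => h y (by
      rw [← Real.norm_eq_abs, hyB]
      exact mul_le_mul_of_nonneg_left (by linarith [hy.2]) hM)) hx
  exact this.trans (mul_le_mul_of_nonneg_left (by linarith [hx.2]) hM)

/-- If `|q'| < M` as long as `q` stays within `M * r` of `q x₀`, then `q` does stay that close to
`q x₀` on `[x₀ - r, x₀ + r]`. -/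
lemma fence {q dq : ℝ → ℝ} (hq : ∀ x, HasDerivAt q (dq x) x) {x₀ M r : ℝ} (hM : 0 ≤ M)
    (h : ∀ x, |q x - q x₀| ≤ M * r → |dq x| < M) {x : ℝ} (hx : |x - x₀| ≤ r) :
    |q x - q x₀| ≤ M * r := by
  rw [abs_le] at hx
  rcases le_total x₀ x with h0 | h0
  · exact fence_right hq hM h ⟨h0, by linarith⟩
  · have hq' : ∀ y, HasDerivAt (fun y => q (-y)) (-dq (-y)) y := fun y =>
      ((hq (-y)).comp y (hasDerivAt_neg y)).congr_deriv (by ring)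
    have := fence_right hq' (x₀ := -x₀) (r := r) hM
      (fun y hy => by rw [abs_neg]; exact h _ (by simpa using hy)) (x := -x)
      ⟨by linarith, by linarith⟩
    simpa using this

/-- Near a point where `Q_{c₀}' > 0`, the first integral controls the neighbouring profiles: they
are increasing on a common interval around that point, with values in a region where
`c₀ s² - 2 F(s)` is bounded away from zero. -/
lemma locally_monotone {F : ℝ → ℝ} (hF : Continuous F) {c₀ : ℝ} {Q : ℝ → ℝ → ℝ}
    (hQ : ∀ᶠ c in 𝓝 c₀, (∀ x, HasDerivAt (Q c) (deriv (Q c) x) x) ∧ Continuous (deriv (Q c)) ∧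
      ∀ x, deriv (Q c) x ^ 2 = c * Q c x ^ 2 - 2 * F (Q c x))
    (hc : ∀ x, ContinuousAt (fun c => Q c x) c₀) {x₀ : ℝ} (hx₀ : 0 < deriv (Q c₀) x₀) :
    ∃ r > 0, ∃ m > 0, ∃ S, ∀ᶠ c in 𝓝 c₀, ∀ x, |x - x₀| ≤ r →
      m ≤ c₀ * Q c x ^ 2 - 2 * F (Q c x) ∧ Q c x ^ 2 ≤ S ∧ 0 < deriv (Q c) x := by
  set q₀ := Q c₀ x₀ with hq₀
  obtain ⟨m, hm, hGm⟩ : ∃ m > 0, c₀ * q₀ ^ 2 - 2 * F q₀ = 2 * m := by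
    refine ⟨deriv (Q c₀) x₀ ^ 2 / 2, by positivity, ?_⟩
    rw [hQ.self_of_nhds.2.2 x₀]
    ring
  obtain ⟨η, hη, hwin⟩ : ∃ η > 0, ∀ s, |s - q₀| ≤ η →
      m < c₀ * s ^ 2 - 2 * F s ∧ c₀ * s ^ 2 - 2 * F s < 3 * m ∧ s ^ 2 < q₀ ^ 2 + 1 := by
    have hG : Continuous fun s => c₀ * s ^ 2 - 2 * F s := by fun_prop
    have e1 := hG.continuousAt.eventually_const_lt (show m < c₀ * q₀ ^ 2 - 2 * F q₀ by linarith)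
    have e2 := hG.continuousAt.eventually_lt_const (show c₀ * q₀ ^ 2 - 2 * F q₀ < 3 * m by linarith)
    have e3 := (continuous_pow (M := ℝ) 2).continuousAt.eventually_lt_const
      (show q₀ ^ 2 < q₀ ^ 2 + 1 by linarith)
    obtain ⟨η, hη, h⟩ := Metric.nhds_basis_closedBall.eventually_iff.1 (e1.and (e2.and e3))
    exact ⟨η, hη, fun s hs => h (by simpa [Real.dist_eq] using hs)⟩
  set M := 4 * m + 1 with hM
  have hM0 : 0 < M := by positivity
  have hr : 0 < η / (2 * M) := by positivity
  have hMr : M * (η / (2 * M)) = η / 2 := by field_simp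
  set r := η / (2 * M)
  set S := q₀ ^ 2 + 1 with hS
  have hS0 : 0 < S := by positivity
  have hgood : ∀ᶠ c in 𝓝 c₀, (∀ x, HasDerivAt (Q c) (deriv (Q c) x) x) ∧ Continuous (deriv (Q c)) ∧
      ∀ x, |x - x₀| ≤ r →
        |Q c x - q₀| ≤ η ∧ deriv (Q c) x ≠ 0 := by
    have e1 : ∀ᶠ c in 𝓝 c₀, |c - c₀| < m / S :=
      Metric.ball_mem_nhds c₀ (show 0 < m / S by positivity)
    have e2 : ∀ᶠ c in 𝓝 c₀, |Q c x₀ - q₀| < η / 2 := by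
      have := (hc x₀).eventually (Metric.ball_mem_nhds _ (show 0 < η / 2 by positivity))
      simpa [Real.dist_eq] using this
    filter_upwards [hQ, e1, e2] with c ⟨hd, hcont, hfi⟩ h1 h2
    have key : ∀ x, |Q c x - q₀| ≤ η → 0 < deriv (Q c) x ^ 2 ∧ deriv (Q c) x ^ 2 < M ^ 2 := by
      intro x hx
      obtain ⟨w1, w2, w3⟩ := hwin _ hx
      have h3 : |(c - c₀) * Q c x ^ 2| < m := by
        rw [abs_mul, abs_of_nonneg (sq_nonneg (Q c x))]
        rw [lt_div_iff₀ hS0] at h1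
        exact (mul_le_mul_of_nonneg_left w3.le (abs_nonneg _)).trans_lt h1
      rw [abs_lt] at h3
      rw [hfi x]
      constructor
      · linarith
      · nlinarith
    have hwx : ∀ x, |Q c x - Q c x₀| ≤ M * r → |Q c x - q₀| ≤ η := by
      intro x hx
      rw [hMr] at hx
      have := abs_sub_le (Q c x) (Q c x₀) q₀
      linarith
    refine ⟨hd, hcont, fun x hx => ?_⟩
    have hxw := hwx x (fence hd hM0.le
      (fun y hy => abs_lt_of_sq_lt_sq (key y (hwx y hy)).2 hM0.le) hx)
    exact ⟨hxw, fun h0 => by simpa [h0] using (key x hxw).1⟩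
  have hsgn : ∀ c, Continuous (deriv (Q c)) → (∀ x, |x - x₀| ≤ r → deriv (Q c) x ≠ 0) →
      ∀ ξ, |ξ - x₀| ≤ r → 0 < deriv (Q c) ξ → ∀ x, |x - x₀| ≤ r → 0 < deriv (Q c) x := by
    intro c hcont hne ξ hξ hpos x hx
    by_contra hneg
    obtain ⟨y, hy, hy0⟩ := intermediate_value_uIcc (a := x) (b := ξ) hcont.continuousOn
      (show (0 : ℝ) ∈ uIcc (deriv (Q c) x) (deriv (Q c) ξ) from
        mem_uIcc_of_le (not_lt.1 hneg) hpos.le)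
    refine hne y ?_ hy0
    have hball : ∀ z, |z - x₀| ≤ r ↔ z ∈ Icc (x₀ - r) (x₀ + r) := fun z => by
      rw [abs_le, mem_Icc]
      constructor <;> rintro ⟨h1, h2⟩ <;> constructor <;> linarith
    rw [hball] at hx hξ ⊢
    exact uIcc_subset_Icc hx hξ hy
  have hmvt : ∀ c, (∀ x, HasDerivAt (Q c) (deriv (Q c) x) x) →
      ∃ ξ, |ξ - x₀| ≤ r ∧ deriv (Q c) ξ = (Q c (x₀ + r) - Q c x₀) / r := by
    intro c hd
    obtain ⟨ξ, hξ, h⟩ := exists_hasDerivAt_eq_slope (Q c) (deriv (Q c)) (show x₀ < x₀ + r by linarith)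
      (fun y _ => (hd y).continuousAt.continuousWithinAt) (fun y _ => hd y)
    refine ⟨ξ, ?_, by simpa using h⟩
    rw [abs_le]
    constructor <;> linarith [hξ.1, hξ.2]
  have hinc : Q c₀ x₀ < Q c₀ (x₀ + r) := by
    obtain ⟨hd, hcont, hg⟩ := hgood.self_of_nhds
    obtain ⟨ξ, hξ, h⟩ := hmvt c₀ hd
    have := hsgn c₀ hcont (fun x hx => (hg x hx).2) x₀ (by simpa using hr.le) hx₀ ξ hξ
    rw [h, lt_div_iff₀ hr] at this
    linarith
  refine ⟨r, hr, m, hm, S, ?_⟩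
  filter_upwards [hgood, (hc x₀).eventually_lt (hc (x₀ + r)) hinc] with c ⟨hd, hcont, hg⟩ hlt x hx
  obtain ⟨w1, w2, w3⟩ := hwin _ (hg x hx).1
  obtain ⟨ξ, hξ, h⟩ := hmvt c hd
  exact ⟨w1.le, w3.le, hsgn c hcont (fun x hx => (hg x hx).2) ξ hξ
    (by rw [h]; exact div_pos (by linarith) hr) x hx⟩

/-- Write `g = √(c₀ s² - 2 F(s))` near `Q_{c₀}(x₀)`, and let `T` be a primitive of `1 / g`. As
`Q_c' = √(c Q_c² - 2 F(Q_c))`, the function `T ∘ Q_c` has derivative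
`√(1 + (c - c₀) Q_c² / g(Q_c)²)`, and differentiating in `c` under an integral over a bounded
interval gives `Λ(x) / g(Q_{c₀}(x)) = Λ(x₀) / g(Q_{c₀}(x₀)) + ½ ∫ Q_{c₀}² / g(Q_{c₀})²`.
The right-hand side is `C¹` in `x`. -/
lemma differentiableAt_paramDeriv_of_pos {F : ℝ → ℝ} (hF : Continuous F) {c₀ : ℝ} {Q : ℝ → ℝ → ℝ}
    (hQ : ∀ᶠ c in 𝓝 c₀, (∀ x, HasDerivAt (Q c) (deriv (Q c) x) x) ∧ Continuous (deriv (Q c)) ∧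
      ∀ x, deriv (Q c) x ^ 2 = c * Q c x ^ 2 - 2 * F (Q c x))
    {Λ : ℝ → ℝ} (hΛ : ∀ x, HasDerivAt (fun c => Q c x) (Λ x) c₀) {x₀ : ℝ}
    (hx₀ : 0 < deriv (Q c₀) x₀) (h2 : DifferentiableAt ℝ (deriv (Q c₀)) x₀) :
    DifferentiableAt ℝ Λ x₀ := by
  obtain ⟨r, hr, m, hm, S, hJ⟩ := locally_monotone hF hQ (fun x => (hΛ x).continuousAt) hx₀
  -- truncating at `m` makes the function positive everywhere without changing it on the window
  set G : ℝ → ℝ := fun s => max (c₀ * s ^ 2 - 2 * F s) m with hG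
  have hGc : Continuous G := by fun_prop
  have hGm : ∀ s, m ≤ G s := fun s => le_max_right _ _
  have hGpos : ∀ s, 0 < G s := fun s => hm.trans_le (hGm s)
  set g : ℝ → ℝ := fun s => √(G s) with hg
  have hgc : Continuous g := hGc.sqrt
  have hgpos : ∀ s, 0 < g s := fun s => Real.sqrt_pos.2 (hGpos s)
  have hgsq : ∀ s, g s ^ 2 = G s := fun s => Real.sq_sqrt (hGpos s).le
  set R : ℝ → ℝ := fun s => s ^ 2 / G s with hR
  have hRc : Continuous R := (continuous_pow 2).div hGc fun s => (hGpos s).ne'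
  set T : ℝ → ℝ := fun s => ∫ t in (0:ℝ)..s, (g t)⁻¹ with hT
  have hTd : ∀ s, HasDerivAt T (g s)⁻¹ s := fun s => by
    have : Continuous fun t => (g t)⁻¹ := hgc.inv₀ fun s => (hgpos s).ne'
    exact intervalIntegral.integral_hasDerivAt_right (this.intervalIntegrable _ _)
      (this.stronglyMeasurableAtFilter _ _) this.continuousAt
  set v : ℝ → ℝ → ℝ := fun c y => deriv (Q c) y / g (Q c y) with hv
  set w : ℝ → ℝ → ℝ := fun c y => R (Q c y) / (v c y + 1) with hw
  set J : Set ℝ := {x | |x - x₀| ≤ r}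
  have hJx : ∀ x ∈ J, uIcc x₀ x ⊆ J := by
    intro x hx y hy
    exact (abs_sub_left_of_mem_uIcc hy).trans hx
  have hgood : ∀ᶠ c in 𝓝 c₀, (∀ x, HasDerivAt (Q c) (deriv (Q c) x) x) ∧
      Continuous (deriv (Q c)) ∧ ∀ y ∈ J, 0 < v c y ∧ v c y ^ 2 = 1 + (c - c₀) * R (Q c y) ∧
        R (Q c y) ≤ S / m := by
    filter_upwards [hQ, hJ] with c ⟨hd, hcont, hfi⟩ hJc
    refine ⟨hd, hcont, fun y hy => ?_⟩
    obtain ⟨h3, h4, h5⟩ := hJc y hy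
    refine ⟨div_pos h5 (hgpos _), ?_, div_le_div₀ ((sq_nonneg _).trans h4) h4 hm (hGm _)⟩
    have h6 : G (Q c y) = c₀ * Q c y ^ 2 - 2 * F (Q c y) := max_eq_left h3
    have h7 := (hGpos (Q c y)).ne'
    simp only [hv, hR, div_pow, hgsq, hfi]
    rw [div_eq_iff h7, add_mul, mul_assoc, div_mul_cancel₀ _ h7, h6]
    ring
  have hv0 : ∀ y ∈ J, v c₀ y = 1 := by
    intro y hy
    obtain ⟨h3, h4, -⟩ := hgood.self_of_nhds.2.2 y hy
    simp only [sub_self, zero_mul, add_zero] at h4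
    nlinarith
  have hvlim : ∀ y ∈ J, Tendsto (fun c => v c y) (𝓝 c₀) (𝓝 1) := by
    intro y hy
    have h3 : ContinuousAt (fun c => √(1 + (c - c₀) * R (Q c y))) c₀ :=
      (continuousAt_const.add ((continuousAt_id.sub continuousAt_const).mul
        (hRc.continuousAt.comp (hΛ y).continuousAt))).sqrt
    have h4 := h3.tendsto
    simp only [sub_self, zero_mul, add_zero, Real.sqrt_one] at h4
    refine h4.congr' ?_
    filter_upwards [hgood] with c ⟨_, _, hc⟩
    rw [← (hc y hy).2.1, Real.sqrt_sq (hc y hy).1.le]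
  obtain ⟨hd0, hcont0, hg0⟩ := hgood.self_of_nhds
  -- `T ∘ Q_c - T ∘ Q_{c₀}` has derivative `v c - 1`, and `v c - 1 = (c - c₀) * w c` because
  -- `(v c)² = 1 + (c - c₀) R(Q_c)`
  have hslope : ∀ x ∈ J, ∀ᶠ c in 𝓝[≠] c₀,
      slope (fun c => T (Q c x) - T (Q c x₀)) c₀ c = ∫ y in x₀..x, w c y := by
    intro x hx
    filter_upwards [hgood.filter_mono nhdsWithin_le_nhds, self_mem_nhdsWithin]
      with c ⟨hd, hcont, hc⟩ hne
    have hne' : c - c₀ ≠ 0 := sub_ne_zero.2 hne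
    have hvc : Continuous (v c) := hcont.div (hgc.comp
      (continuous_iff_continuousAt.2 fun y => (hd y).continuousAt)) fun y => (hgpos _).ne'
    have hwc : ContinuousOn (w c) (uIcc x₀ x) :=
      (hRc.comp (continuous_iff_continuousAt.2 fun y => (hd y).continuousAt)).continuousOn.div
        (hvc.add continuous_const).continuousOn
        fun y hy => by linarith [(hc y (hJx x hx hy)).1]
    have hder : ∀ y ∈ uIcc x₀ x,
        HasDerivAt (fun y => (T (Q c y) - T (Q c₀ y)) / (c - c₀)) (w c y) y := by
      intro y hy
      obtain ⟨h3, h4, -⟩ := hc y (hJx x hx hy)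
      refine ((((hTd _).comp y (hd y)).sub ((hTd _).comp y (hd0 y))).div_const _).congr_deriv ?_
      have h5 : (g (Q c₀ y))⁻¹ * deriv (Q c₀) y = 1 := by
        rw [← hv0 y (hJx x hx hy), hv, inv_mul_eq_div]
      have h6 : (g (Q c y))⁻¹ * deriv (Q c) y = v c y := inv_mul_eq_div _ _
      rw [h5, h6, hw]
      have h7 : v c y + 1 ≠ 0 := by linarith
      rw [div_eq_div_iff hne' h7]
      linear_combination h4
    rw [intervalIntegral.integral_eq_sub_of_hasDerivAt hder hwc.intervalIntegrable, slope_def_field]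
    ring
  have hformula : ∀ x ∈ J, Λ x = deriv (Q c₀) x *
      (Λ x₀ / g (Q c₀ x₀) + ∫ y in x₀..x, R (Q c₀ y) / 2) := by
    intro x hx
    have hderiv : HasDerivAt (fun c => T (Q c x) - T (Q c x₀))
        ((g (Q c₀ x))⁻¹ * Λ x - (g (Q c₀ x₀))⁻¹ * Λ x₀) c₀ :=
      ((hTd _).comp c₀ (hΛ x)).sub ((hTd _).comp c₀ (hΛ x₀))
    have hlim1 := hderiv.tendsto_slope.congr' (hslope x hx)
    have hlim2 : Tendsto (fun c => ∫ y in x₀..x, w c y) (𝓝[≠] c₀)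
        (𝓝 (∫ y in x₀..x, R (Q c₀ y) / 2)) := by
      refine intervalIntegral.tendsto_integral_filter_of_dominated_convergence (fun _ => S / m)
        ?_ ?_ intervalIntegrable_const ?_
      · filter_upwards [hgood.filter_mono nhdsWithin_le_nhds] with c ⟨hd, hcont, hc⟩
        have hq : Measurable (Q c) :=
          (continuous_iff_continuousAt.2 fun y => (hd y).continuousAt).measurable
        exact ((hRc.measurable.comp hq).div
          ((hcont.measurable.div (hgc.measurable.comp hq)).add_const 1)).aestronglyMeasurable
      · filter_upwards [hgood.filter_mono nhdsWithin_le_nhds] with c ⟨hd, hcont, hc⟩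
        refine Eventually.of_forall fun y hy => ?_
        obtain ⟨h3, -, h5⟩ := hc y (hJx x hx (uIoc_subset_uIcc hy))
        have h6 : 0 ≤ R (Q c y) := div_nonneg (sq_nonneg _) (hGpos _).le
        rw [Real.norm_eq_abs, abs_of_nonneg (div_nonneg h6 (by linarith))]
        exact (div_le_self h6 (by linarith)).trans h5
      · refine Eventually.of_forall fun y hy => Tendsto.mono_left ?_ nhdsWithin_le_nhds
        have h3 := (hvlim y (hJx x hx (uIoc_subset_uIcc hy))).add_const 1
        rw [one_add_one_eq_two] at h3
        exact ((hRc.continuousAt.comp (hΛ y).continuousAt).tendsto).div h3 two_ne_zero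
    have heq := tendsto_nhds_unique hlim1 hlim2
    have h3 : deriv (Q c₀) x = g (Q c₀ x) := by
      rw [← one_mul (g (Q c₀ x)), ← hv0 x hx]
      exact (div_mul_cancel₀ _ (hgpos _).ne').symm
    have h4 := (hgpos (Q c₀ x)).ne'
    rw [← heq, h3]
    field_simp
    ring
  have hRQ : Continuous fun y => R (Q c₀ y) / 2 :=
    (hRc.comp (continuous_iff_continuousAt.2 fun y => (hd0 y).continuousAt)).div_const 2
  have hint : DifferentiableAt ℝ (fun x => ∫ y in x₀..x, R (Q c₀ y) / 2) x₀ :=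
    (intervalIntegral.integral_hasDerivAt_right (hRQ.intervalIntegrable _ _)
      (hRQ.stronglyMeasurableAtFilter _ _) hRQ.continuousAt).differentiableAt
  refine (h2.mul (hint.const_add (Λ x₀ / g (Q c₀ x₀)))).congr_of_eventuallyEq ?_
  filter_upwards [Metric.closedBall_mem_nhds x₀ hr] with x hx
  exact hformula x hx

/-- The parameter derivative `Λ` of a family of profiles is differentiable in `x` away from the
critical points of the profile; this is a consequence of the first integral, and no regularity of
`Λ` in `x` is assumed. -/
lemma differentiableAt_paramDeriv {F : ℝ → ℝ} (hF : Continuous F) {c₀ : ℝ} {Q : ℝ → ℝ → ℝ}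
    (hQ : ∀ᶠ c in 𝓝 c₀, ContDiff ℝ 2 (Q c) ∧
      ∀ x, deriv (Q c) x ^ 2 = c * Q c x ^ 2 - 2 * F (Q c x))
    {Λ : ℝ → ℝ} (hΛ : ∀ x, HasDerivAt (fun c => Q c x) (Λ x) c₀) {x₀ : ℝ}
    (hx₀ : deriv (Q c₀) x₀ ≠ 0) : DifferentiableAt ℝ Λ x₀ := by
  have hcont : ∀ {q : ℝ → ℝ}, ContDiff ℝ 2 q → Continuous (deriv q) := fun hq =>
    continuous_iff_continuousAt.2 fun x => (hq.hasDerivAt_two x).2.continuousAt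
  rcases hx₀.lt_or_gt with hneg | hpos
  -- the reflected profiles `x ↦ Q c (-x)` are increasing at `-x₀`
  · have hrefl : ∀ c, deriv (fun x => Q c (-x)) = fun x => -deriv (Q c) (-x) := fun c =>
      funext fun x => deriv_comp_neg (Q c) x
    have hd : DifferentiableAt ℝ (fun x => Λ (-x)) (-x₀) := by
      refine differentiableAt_paramDeriv_of_pos hF (Q := fun c x => Q c (-x)) ?_ (fun x => hΛ (-x)) ?_ ?_
      · filter_upwards [hQ] with c ⟨hreg, hfi⟩
        have hreg' : ContDiff ℝ 2 (fun x => Q c (-x)) := hreg.comp contDiff_neg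
        refine ⟨fun x => (hreg'.hasDerivAt_two x).1, hcont hreg', fun x => ?_⟩
        rw [hrefl, neg_sq]
        exact hfi (-x)
      · rw [hrefl]
        simpa using hneg
      · have hreg' : ContDiff ℝ 2 (fun x => Q c₀ (-x)) := hQ.self_of_nhds.1.comp contDiff_neg
        exact (hreg'.hasDerivAt_two _).2.differentiableAt
    have := hd.comp x₀ differentiableAt_id.neg
    simpa [Function.comp_def] using this
  · refine differentiableAt_paramDeriv_of_pos hF ?_ hΛ hpos
      (hQ.self_of_nhds.1.hasDerivAt_two x₀).2.differentiableAt
    filter_upwards [hQ] with c ⟨hreg, hfi⟩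
    exact ⟨fun x => (hreg.hasDerivAt_two x).1, hcont hreg, hfi⟩

/-! ### The energy identity -/

lemma measurable_paramDeriv {c₀ : ℝ} {Q : ℝ → ℝ → ℝ} (hQ : ∀ᶠ c in 𝓝 c₀, Measurable (Q c))
    {Λ : ℝ → ℝ} (hΛ : ∀ x, HasDerivAt (fun c => Q c x) (Λ x) c₀) : Measurable Λ := by
  classical
  refine measurable_of_tendsto_metrizable' (𝓝[≠] c₀)
    (f := fun c x => if Measurable (Q c) then slope (fun c => Q c x) c₀ c else 0)
    (fun c => ?_) (tendsto_pi_nhds.2 fun x => ?_)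
  · by_cases h : Measurable (Q c)
    · simp only [h, if_true, slope_def_field]
      exact (h.sub hQ.self_of_nhds).div_const _
    · simp only [h, if_false]
      exact measurable_const
  · refine (hΛ x).tendsto_slope.congr' ?_
    filter_upwards [hQ.filter_mono nhdsWithin_le_nhds] with c hc
    simp [hc]

/-- Derivative of the soliton energy along the family:
`(d/dc) E(Q_c) = -(c/2) (d/dc) ∫ Q_c²`. -/
theorem derivative_of_soliton_energy
    (f : ℝ → ℝ) (hf : Continuous f)
    (a b : ℝ) (hI : Set.Ioo a b ⊆ Set.Ioi (0:ℝ))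
    (Qc : ℝ → ℝ → ℝ)
    (hQreg : ∀ c ∈ Set.Ioo a b, ContDiff ℝ 2 (Qc c))
    (hQeq : ∀ c ∈ Set.Ioo a b, ∀ x,
      deriv (deriv (Qc c)) x + f (Qc c x) = c * Qc c x)
    (hQb : ∀ c ∈ Set.Ioo a b, ExpBounded (Qc c) ∧ ExpBounded (deriv (Qc c)))
    (Λ : ℝ → ℝ → ℝ)
    (hΛ : ∀ c ∈ Set.Ioo a b, ∀ x, HasDerivAt (fun c' => Qc c' x) (Λ c x) c)
    (hΛb : ∀ c ∈ Set.Ioo a b, ExpBounded (Λ c) ∧ ExpBounded (deriv (Λ c)))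
    -- differentiation under the integral sign is valid
    (hdE : ∀ c ∈ Set.Ioo a b,
      HasDerivAt (fun c' => Energy f (Qc c'))
        (∫ x : ℝ, (deriv (Qc c) x * deriv (Λ c) x - f (Qc c x) * Λ c x)) c)
    (hdM : ∀ c ∈ Set.Ioo a b,
      HasDerivAt (fun c' => ∫ x : ℝ, (Qc c' x) ^ 2)
        (2 * ∫ x : ℝ, Qc c x * Λ c x) c) :
    ∀ c ∈ Set.Ioo a b, ∀ dE dM : ℝ,
      HasDerivAt (fun c' => Energy f (Qc c')) dE c →
      HasDerivAt (fun c' => ∫ x : ℝ, (Qc c' x) ^ 2) dM c →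
      dE = -(c/2) * dM := by
  intro c hc dE dM hE hM
  rw [hE.unique (hdE c hc), hM.unique (hdM c hc)]
  have hnhds : ∀ᶠ c' in 𝓝 c, c' ∈ Ioo a b := Ioo_mem_nhds hc.1 hc.2
  obtain ⟨hb, hb'⟩ := hQb c hc
  obtain ⟨hLb, hLb'⟩ := hΛb c hc
  have hreg := hQreg c hc
  have hQcont : Continuous (Qc c) := hreg.continuous
  have hfQ : Continuous fun x => f (Qc c x) := hf.comp hQcont
  -- where `Λ c` is not differentiable, the junk value of `deriv (Λ c)` is multiplied by `Q' = 0`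
  have hLd : ∀ x, deriv (Qc c) x ≠ 0 → DifferentiableAt ℝ (Λ c) x := fun x hx =>
    differentiableAt_paramDeriv (continuous_iff_continuousAt.2 fun s =>
      (hasDerivAt_Fprim hf s).continuousAt)
      (hnhds.mono fun c' hc' => ⟨hQreg c' hc',
        first_integral hf (hQreg c' hc') (hQeq c' hc') (hQb c' hc').1 (hQb c' hc').2⟩)
      (hΛ c hc) hx
  have hLm : Measurable (Λ c) := measurable_paramDeriv
    (hnhds.mono fun c' hc' => (hQreg c' hc').continuous.measurable) (hΛ c hc)
  obtain ⟨K, hK⟩ := hb.exists_bound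
  obtain ⟨K', hK'⟩ := hb'.exists_bound
  obtain ⟨KL, hKL⟩ := hLb.exists_bound
  obtain ⟨B, hB⟩ := (isCompact_Icc (a := -K) (b := K)).exists_bound_of_continuousOn hf.continuousOn
  have hLi := hLb.integrable hLm
  have hi1 : Integrable fun x => deriv (Qc c) x * deriv (Λ c) x :=
    (hLb'.integrable (measurable_deriv _)).bdd_mul (measurable_deriv _).aestronglyMeasurable
      (Eventually.of_forall hK')
  have hi2 : Integrable fun x => f (Qc c x) * Λ c x :=
    hLi.bdd_mul hfQ.aestronglyMeasurable (Eventually.of_forall fun x => hB _ (abs_le.1 (hK x)))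
  have hi3 : Integrable fun x => Qc c x * Λ c x :=
    hLi.bdd_mul hQcont.aestronglyMeasurable (Eventually.of_forall hK)
  have hi12 : Integrable fun x => deriv (Qc c) x * deriv (Λ c) x - f (Qc c x) * Λ c x :=
    hi1.sub hi2
  have hi123 : Integrable fun x => deriv (Qc c) x * deriv (Λ c) x - f (Qc c x) * Λ c x +
      c * (Qc c x * Λ c x) := hi12.add (hi3.const_mul c)
  have hsplit : ∀ x, deriv (Qc c) x * deriv (Λ c) x + deriv (deriv (Qc c)) x * Λ c x =
      (deriv (Qc c) x * deriv (Λ c) x - f (Qc c x) * Λ c x) + c * (Qc c x * Λ c x) := fun x => by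
    linear_combination Λ c x * hQeq c hc x
  have hzero := integral_by_parts (fun x => (hreg.hasDerivAt_two x).2)
    (hb'.tendsto tendsto_abs_atTop_atTop) (hb'.tendsto tendsto_abs_atBot_atTop) hKL hLd
    (by simpa only [hsplit] using hi123)
  simp only [hsplit] at hzero
  rw [integral_add hi12 (hi3.const_mul c), integral_const_mul] at hzero
  linarith
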